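/- arXiv:1402.6520 — 9 statements merged into one kernel-verified Lean document; each statement's English description precedes it below -/
import Mathlib

section
/- Let c ≠ 0 and d ≠ 0 be real constants with c ≠ d. Then there is no group homomorphism φ : E_c → E_d satisfying φ((0,0),z) = ((0,0),z) for all z ∈ ℝ and π(φ((x,y),z)) = (x,y) for all (x,y,z), where π denotes the projection ((x,y),z) ↦ (x,y). That is, the central extensions E_c and E_d of (ℝ²,+) by (ℝ,+) are not equivalent. -/
/-! A homomorphism `φ` carries commutators to commutators. For lifts of `(1, 0)` and `(0, 1)`, the
commutator is the central element `2c` in `E_c`, and `2d` in `E_d`, whatever the lifts. Since `φ`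
covers the identity of `ℝ²` it sends lifts to lifts, and it fixes the central elements, so
`2c = 2d`. -/

/-- The group operation of E_c on (ℝ×ℝ)×ℝ. -/
noncomputable def eMul (c : ℝ) (p q : (ℝ × ℝ) × ℝ) : (ℝ × ℝ) × ℝ :=
  ((p.1.1 + q.1.1, p.1.2 + q.1.2),
    p.2 + q.2 + c * (p.1.1 * q.1.2 - p.1.2 * q.1.1))

theorem Ec_Ed_not_equivalent_extensions (c d : ℝ) (hc : c ≠ 0) (hd : d ≠ 0)
    (hcd : c ≠ d) :
    ¬ ∃ φ : (ℝ × ℝ) × ℝ → (ℝ × ℝ) × ℝ,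
      (∀ p q, φ (eMul c p q) = eMul d (φ p) (φ q)) ∧
      (∀ z : ℝ, φ ((0, 0), z) = ((0, 0), z)) ∧
      (∀ p : (ℝ × ℝ) × ℝ, (φ p).1 = p.1) := by
  rintro ⟨φ, hmul, hz, hπ⟩
  have hab := hmul ((1, 0), 0) ((0, 1), 0)
  have hba := hmul ((0, 1), 0) ((1, 0), 0)
  -- `a * b = (b * a) * [a, b]`, where `[a, b]` is the central element `2c`.
  have hcomm := hmul ((1, 1), -c) ((0, 0), 2 * c)
  simp only [eMul, hz, hπ] at hab hba hcomm
  have h1 := congrArg Prod.snd hab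
  have h2 := congrArg Prod.snd hba
  have h3 := congrArg Prod.snd hcomm
  ring_nf at h1 h2 h3
  exact hcd (by linarith)
end

section
/- For every real constant k: the operation (x₁,(y₁,z₁))·(x₂,(y₂,z₂)) = (x₁+x₂e^{z₁}+k y₂ z₁ e^{z₁}, (y₁+y₂e^{z₁}, z₁+z₂)) makes T_k a group; the map i(x) = (x,(0,0)) is an injective group homomorphism from (ℝ,+) into T_k; the map π(x,(y,z)) = (y,z) is a surjective group homomorphism from T_k onto the group ℝ⋊ℝ with operation (y₁,z₁)·(y₂,z₂) = (y₁+e^{z₁}y₂, z₁+z₂); the kernel of π equals the image of i; and for every g ∈ T_k with π(g) = (y,z) and every a ∈ ℝ, one has g · i(a) · g⁻¹ = i(e^{z}a). In other words, T_k is an extension of ℝ⋊ℝ by (ℝ,+) with the conjugation action γ(y,z)(a) = e^{z}a. -/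
/-!
Everything follows by comparing coordinates and using `exp (z₁ + z₂) = exp z₁ * exp z₂`. In the
first coordinate, associativity holds because `k y₂ z₁ e^{z₁}` is a 2-cocycle for the action
`γ(y, z)(a) = e^z a`: both bracketings contribute `k y₃ (z₁ + z₂) e^{z₁ + z₂} + k y₂ z₁ e^{z₁}`.
For the conjugation formula, multiplying `g` on the right by `i(a)` only adds `e^z a` to its first
coordinate, and this summand survives right multiplication by `g⁻¹` unchanged.
-/


/-- The group operation of T_k on ℝ×(ℝ×ℝ). -/
noncomputable def tMul (k : ℝ) (p q : ℝ × ℝ × ℝ) : ℝ × ℝ × ℝ :=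
  (p.1 + q.1 * Real.exp p.2.2 + k * q.2.1 * p.2.2 * Real.exp p.2.2,
    (p.2.1 + q.2.1 * Real.exp p.2.2, p.2.2 + q.2.2))

/-- The group operation of ℝ⋊ℝ : (y₁,z₁)·(y₂,z₂) = (y₁+e^{z₁}y₂, z₁+z₂). -/
noncomputable def sdMul (p q : ℝ × ℝ) : ℝ × ℝ :=
  (p.1 + Real.exp p.2 * q.1, p.2 + q.2)

/-- The map i(x) = (x,(0,0)). -/
def tIncl (x : ℝ) : ℝ × ℝ × ℝ := (x, (0, 0))

theorem Tk_extension (k : ℝ) :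
    -- T_k is a group:
    (∀ p q r, tMul k (tMul k p q) r = tMul k p (tMul k q r)) ∧
    (∀ p, tMul k (0, (0, 0)) p = p) ∧
    (∀ p, tMul k p (0, (0, 0)) = p) ∧
    (∀ p, ∃ q, tMul k p q = (0, (0, 0)) ∧ tMul k q p = (0, (0, 0))) ∧
    -- i is an injective group homomorphism from (ℝ,+) into T_k:
    Function.Injective tIncl ∧
    (∀ x y : ℝ, tIncl (x + y) = tMul k (tIncl x) (tIncl y)) ∧
    -- π(x,(y,z)) = (y,z) is a surjective group homomorphism onto ℝ⋊ℝ: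
    Function.Surjective (fun p : ℝ × ℝ × ℝ => p.2) ∧
    (∀ p q, (tMul k p q).2 = sdMul p.2 q.2) ∧
    -- the kernel of π equals the image of i:
    (∀ p : ℝ × ℝ × ℝ, p.2 = (0, 0) ↔ p ∈ Set.range tIncl) ∧
    -- the conjugation action on the kernel is γ(y,z)(a) = e^z·a:
    (∀ g ginv : ℝ × ℝ × ℝ, ∀ a : ℝ,
      tMul k g ginv = (0, (0, 0)) → tMul k ginv g = (0, (0, 0)) →
      tMul k (tMul k g (tIncl a)) ginv = tIncl (Real.exp g.2.2 * a)) := by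
  refine ⟨?_, ?_, ?_, ?_, ?_, ?_, ?_, ?_, ?_, ?_⟩
  · rintro ⟨x₁, y₁, z₁⟩ ⟨x₂, y₂, z₂⟩ ⟨x₃, y₃, z₃⟩
    simp only [tMul, Prod.mk.injEq, Real.exp_add]
    exact ⟨by ring, by ring, by ring⟩
  · rintro ⟨x, y, z⟩
    simp [tMul]
  · rintro ⟨x, y, z⟩
    simp [tMul]
  · rintro ⟨x, y, z⟩
    have h : Real.exp (-z) * Real.exp z = 1 := by rw [← Real.exp_add]; simp
    -- The last two coordinates invert `(y, z)` in `ℝ ⋊ ℝ`; the first then solves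
    -- `x + x' e^z + k y' z e^z = 0` with `y' = -y e^{-z}`.
    refine ⟨((k * y * z - x) * Real.exp (-z), (-y * Real.exp (-z), -z)), ?_, ?_⟩
    · simp only [tMul, Prod.mk.injEq]
      exact ⟨by linear_combination (-x) * h, by linear_combination (-y) * h, by ring⟩
    · simp only [tMul, Prod.mk.injEq]
      exact ⟨by ring, by ring, by ring⟩
  · intro x y h
    exact congrArg Prod.fst h
  · intro x y
    simp [tMul, tIncl]
  · intro q
    exact ⟨(0, q), rfl⟩
  · intro p q
    simp [tMul, sdMul, mul_comm]
  · rintro ⟨x, q⟩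
    simp [tIncl, eq_comm]
  · rintro ⟨x, y, z⟩ ⟨x', y', z'⟩ a h _
    simp only [tMul, Prod.mk.injEq] at h
    obtain ⟨hx, hy, hz⟩ := h
    simp only [tMul, tIncl, Prod.mk.injEq, add_zero, zero_mul, mul_zero]
    exact ⟨by linear_combination hx, hy, hz⟩
end

section
/- Let d ≠ 0 be a real constant and fix ((x,y),z) ∈ ℝ²×ℝ. (1) If z ≠ 0, then the map h_z : ℝ → ℝ²⋊_{τ_d}ℝ defined by w ↦ ((((e^{dzw}−1)/(e^{dz}−1))·x, ((e^{zw}−1)/(e^{z}−1))·y), wz) is a group homomorphism from (ℝ,+) into ℝ²⋊_{τ_d}ℝ. (2) If z = 0, then the map h₀ : ℝ → ℝ²⋊_{τ_d}ℝ defined by w ↦ ((wx, wy), 0) is a group homomorphism from (ℝ,+) into ℝ²⋊_{τ_d}ℝ. -/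
/-- The group operation of ℝ²⋊_{τ_c}ℝ. -/
noncomputable def tauMul (c : ℝ) (p q : (ℝ × ℝ) × ℝ) : (ℝ × ℝ) × ℝ :=
  ((p.1.1 + Real.exp (c * p.2) * q.1.1, p.1.2 + Real.exp p.2 * q.1.2),
    p.2 + q.2)

/-- The map h_z for z ≠ 0. -/
noncomputable def hz (d x y z : ℝ) (w : ℝ) : (ℝ × ℝ) × ℝ :=
  (((Real.exp (d * z * w) - 1) / (Real.exp (d * z) - 1) * x,
    (Real.exp (z * w) - 1) / (Real.exp z - 1) * y), w * z)

/-- The map h₀ for z = 0. -/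
def h0 (x y : ℝ) (w : ℝ) : (ℝ × ℝ) × ℝ := ((w * x, w * y), 0)

theorem one_parameter_subgroups (d : ℝ) (hd : d ≠ 0) (x y z : ℝ) :
    -- (1) if z ≠ 0, then h_z is a homomorphism from (ℝ,+) into ℝ²⋊_{τ_d}ℝ:
    (z ≠ 0 → ∀ w w' : ℝ,
      hz d x y z (w + w') = tauMul d (hz d x y z w) (hz d x y z w')) ∧
    -- (2) if z = 0, then h₀ is a homomorphism from (ℝ,+) into ℝ²⋊_{τ_d}ℝ:
    (z = 0 → ∀ w w' : ℝ,
      h0 x y (w + w') = tauMul d (h0 x y w) (h0 x y w')) := by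
  -- Each coordinate of `h_z` rests on the cocycle identity
  -- `e^(s+t) - 1 = (e^s - 1) + e^s (e^t - 1)`, divided by a constant.
  refine ⟨fun _ w w' => ?_, fun _ w w' => ?_⟩
  · have h₁ : Real.exp (d * z * (w + w')) =
        Real.exp (d * (w * z)) * Real.exp (d * z * w') := by
      rw [← Real.exp_add]; ring_nf
    have h₂ : Real.exp (z * (w + w')) = Real.exp (w * z) * Real.exp (z * w') := by
      rw [← Real.exp_add]; ring_nf
    have h₃ : d * z * w = d * (w * z) := by ring
    simp only [hz, tauMul, Prod.mk.injEq, h₁, h₂, h₃, mul_comm z w]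
    refine ⟨⟨?_, ?_⟩, ?_⟩ <;> ring
  · simp only [h0, tauMul, Prod.mk.injEq, mul_zero, Real.exp_zero]
    refine ⟨⟨?_, ?_⟩, ?_⟩ <;> ring
end

section
/- For every real constant c ≠ 0, the map ((x,y),z) ↦ ((y,x), cz) is a group isomorphism from ℝ²⋊_{τ_c}ℝ onto ℝ²⋊_{τ_{1/c}}ℝ. -/
/-- The map ((x,y),z) ↦ ((y,x), cz). -/
noncomputable def tauSwap (c : ℝ) (p : (ℝ × ℝ) × ℝ) : (ℝ × ℝ) × ℝ :=
  ((p.1.2, p.1.1), c * p.2)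

theorem tau_c_iso_tau_inv_c (c : ℝ) (hc : c ≠ 0) :
    Function.Bijective (tauSwap c) ∧
    ∀ p q : (ℝ × ℝ) × ℝ,
      tauSwap c (tauMul c p q) = tauMul (1 / c) (tauSwap c p) (tauSwap c q) := by
  refine ⟨Function.bijective_iff_has_inverse.mpr ⟨tauSwap c⁻¹, fun p => ?_, fun p => ?_⟩,
    fun p q => ?_⟩
  · simp [tauSwap, hc]
  · simp [tauSwap, hc]
  · have h : 1 / c * (c * p.2) = p.2 := by field_simp
    simp only [tauSwap, tauMul, h, mul_add]
end

section
/- Let c ≠ 0 and d ≠ 0 be real constants with c ≠ d and c ≠ 1/d. Then there is no group isomorphism from ℝ²⋊_{τ_c}ℝ onto ℝ²⋊_{τ_d}ℝ that is continuous with continuous inverse (with respect to the standard topology on ℝ³). -/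
/-- A homomorphism sends the abelian normal subgroup `ℝ² × {0}` into its counterpart, because this
subgroup consists of commutators and the last coordinate is a homomorphism to `ℝ`. -/
lemma snd_map_eq_zero {c d : ℝ} (hc : c ≠ 0) {f : (ℝ × ℝ) × ℝ → (ℝ × ℝ) × ℝ}
    (hf : ∀ p q, f (tauMul c p q) = tauMul d (f p) (f q)) (v : ℝ × ℝ) :
    (f (v, 0)).2 = 0 := by
  have hz (p q) : (f (tauMul c p q)).2 = (f p).2 + (f q).2 := by rw [hf]; rfl
  have hec : Real.exp c - 1 ≠ 0 := by
    rw [sub_ne_zero]; exact fun h => hc (Real.exp_eq_one_iff c |>.1 h)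
  have he : Real.exp 1 - 1 ≠ 0 := by
    rw [sub_ne_zero]; exact fun h => one_ne_zero (Real.exp_eq_one_iff 1 |>.1 h)
  obtain ⟨x, y⟩ := v
  -- `v = w - v'`, where `v' = (x', y')` and `w` is the conjugate of `v'` by `t`.
  set x' := x / (Real.exp c - 1) with hx'
  set y' := y / (Real.exp 1 - 1) with hy'
  have e1 : tauMul c ((0, 0), 1) ((x', y'), 0)
      = tauMul c ((Real.exp c * x', Real.exp 1 * y'), 0) ((0, 0), 1) := by
    simp [tauMul]
  have e2 : tauMul c ((x, y), 0) ((x', y'), 0)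
      = ((Real.exp c * x', Real.exp 1 * y'), 0) := by
    have hx : x = x' * (Real.exp c - 1) := by rw [hx']; field_simp
    have hy : y = y' * (Real.exp 1 - 1) := by rw [hy']; field_simp
    simp only [tauMul, mul_zero, Real.exp_zero, one_mul, add_zero, Prod.mk.injEq, and_true]
    constructor
    · linear_combination hx
    · linear_combination hy
  have h1 := congrArg (fun p => (f p).2) e1
  have h2 := congrArg (fun p => (f p).2) e2
  simp only [hz] at h1 h2
  linarith

theorem tau_c_not_iso_tau_d (c d : ℝ) (hc : c ≠ 0) (hd : d ≠ 0)
    (h1 : c ≠ d) (h2 : c ≠ 1 / d) :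
    ¬ ∃ φ : ((ℝ × ℝ) × ℝ) ≃ₜ ((ℝ × ℝ) × ℝ),
      ∀ p q : (ℝ × ℝ) × ℝ, φ (tauMul c p q) = tauMul d (φ p) (φ q) := by
  rintro ⟨φ, hφ⟩
  have hN := snd_map_eq_zero hc hφ
  have hadd (v w : ℝ × ℝ) : (φ (v + w, 0)).1 = (φ (v, 0)).1 + (φ (w, 0)).1 := by
    have h := congrArg Prod.fst (hφ (v, 0) (w, 0))
    simpa [tauMul, hN, ← Prod.mk_add_mk] using h
  let A : (ℝ × ℝ) →+ (ℝ × ℝ) := AddMonoidHom.mk' (fun v => (φ (v, 0)).1) hadd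
  have hAc : Continuous A := by
    change Continuous fun v : ℝ × ℝ => (φ (v, 0)).1
    fun_prop
  have hA (v : ℝ × ℝ) : φ (v, 0) = (A v, 0) := Prod.ext rfl (hN v)
  have hAinj (v : ℝ × ℝ) (hv : A v = 0) : v = 0 := by
    have : φ (v, 0) = φ (0, 0) := by rw [hA, hA, hv, map_zero]
    exact congrArg Prod.fst (φ.injective this)
  obtain ⟨a, p, hap⟩ : ∃ a p, A (1, 0) = (a, p) := ⟨_, _, rfl⟩
  obtain ⟨b, q, hbq⟩ : ∃ b q, A (0, 1) = (b, q) := ⟨_, _, rfl⟩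
  have hmat (x y : ℝ) : A (x, y) = (a * x + b * y, p * x + q * y) := by
    have : ((x, y) : ℝ × ℝ) = x • (1, 0) + y • (0, 1) := by simp
    rw [this, map_add, map_real_smul A hAc, map_real_smul A hAc, hap, hbq]
    simp [mul_comm]
  obtain ⟨u, l, hul⟩ : ∃ u l, φ ((0, 0), 1) = (u, l) := ⟨_, _, rfl⟩
  have hconj (x y : ℝ) : A (Real.exp c * x, Real.exp 1 * y)
      = (Real.exp (d * l) * (A (x, y)).1, Real.exp l * (A (x, y)).2) := by
    have e : tauMul c ((0, 0), 1) ((x, y), 0)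
        = tauMul c ((Real.exp c * x, Real.exp 1 * y), 0) ((0, 0), 1) := by
      simp [tauMul]
    have h := congrArg (fun p => (φ p).1) e
    simp only [hφ, hul, hA] at h
    simp only [tauMul, mul_zero, Real.exp_zero, one_mul, Prod.mk.injEq] at h
    apply Prod.ext
    · linear_combination -h.1
    · linear_combination -h.2
  have key {r s m : ℝ} (hm : m ≠ 0) (h : m * Real.exp r = Real.exp s * m) : r = s :=
    Real.exp_injective (mul_left_cancel₀ hm (h.trans (mul_comm _ _)))
  have hx := hconj 1 0
  have hy := hconj 0 1
  simp only [hmat, mul_zero, mul_one, add_zero, zero_add, Prod.mk.injEq] at hx hy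
  have hdet : a * q - b * p ≠ 0 := by
    intro h
    -- The columns of the adjugate matrix lie in the kernel of `A`.
    have k1 := hAinj (q, -p) (by
      rw [hmat]; exact Prod.ext (by simpa using by linear_combination h) (by simp; ring))
    have k2 := hAinj (b, -a) (by
      rw [hmat]; exact Prod.ext (by simp; ring) (by simpa using by linear_combination -h))
    simp only [Prod.mk_eq_zero, neg_eq_zero] at k1 k2
    have k3 := hAinj (1, 0) (by rw [hap, k1.2, k2.2]; rfl)
    simp at k3
  by_cases haq : a * q = 0
  · have hbp : b * p ≠ 0 := fun h => hdet (by rw [haq, h, sub_zero])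
    have hl := key (right_ne_zero_of_mul hbp) hx.2
    have hdl := key (left_ne_zero_of_mul hbp) hy.1
    apply h2
    rw [hl]
    field_simp
    linarith
  · have hl := key (right_ne_zero_of_mul haq) hy.2
    have hdl := key (left_ne_zero_of_mul haq) hx.1
    apply h1
    rw [hdl, ← hl, mul_one]
end

section
/- For every real constant c ≠ 0, there is no group isomorphism from ℝ²⋊_{τ_c}ℝ onto G₃ = T₁ that is continuous with continuous inverse (with respect to the standard topology on ℝ³). -/
lemma additive_eq_mul {f : ℝ → ℝ} (hf : Continuous f) (hadd : ∀ a b, f (a + b) = f a + f b)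
    (a : ℝ) : f a = a * f 1 := by
  have := map_real_smul (AddMonoidHom.mk' f hadd) hf a 1
  simpa using this

/-- A one-parameter subgroup `γ` of `T₁` on which conjugation by `H` acts as a scaling by `l ≠ 1` lies
in the normal subgroup `ℝ²`; if moreover `H` acts on `ℝ²` as a nontrivial Jordan block, then `γ` lies
in the eigenline of that block. -/
lemma eigencurve {γ : ℝ → ℝ × ℝ × ℝ} (hγ : Continuous γ)
    (hadd : ∀ a b, γ (a + b) = tMul 1 (γ a) (γ b)) {l : ℝ} (hl : l ≠ 1) {H : ℝ × ℝ × ℝ}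
    (hH : ∀ a, tMul 1 H (γ a) = tMul 1 (γ (l * a)) H) (a : ℝ) :
    (γ a).2.2 = 0 ∧ (H.2.2 ≠ 0 → (γ a).2.1 = 0) := by
  have hz : ∀ a, (γ a).2.2 = a * (γ 1).2.2 :=
    additive_eq_mul (f := fun a => (γ a).2.2) (by fun_prop) fun a b => by simp [hadd, tMul]
  -- The last coordinate is invariant under conjugation, so its slope `m` along `γ` satisfies `m = l m`.
  have hz1 : (γ 1).2.2 = 0 := by
    have h1 := congrArg (fun p => p.2.2) (hH 1)
    simp only [tMul, mul_one] at h1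
    rw [hz l] at h1
    have h2 : (l - 1) * (γ 1).2.2 = 0 := by linarith
    exact (mul_eq_zero.mp h2).resolve_left (sub_ne_zero.mpr hl)
  have hz0 : ∀ a, (γ a).2.2 = 0 := fun a => by rw [hz, hz1, mul_zero]
  have hx : ∀ a, (γ a).1 = a * (γ 1).1 :=
    additive_eq_mul (f := fun a => (γ a).1) (by fun_prop) fun a b => by simp [hadd, tMul, hz0]
  have hy : ∀ a, (γ a).2.1 = a * (γ 1).2.1 :=
    additive_eq_mul (f := fun a => (γ a).2.1) (by fun_prop) fun a b => by simp [hadd, tMul, hz0]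
  refine ⟨hz0 a, fun hs => ?_⟩
  have h1 := congrArg (fun p => p.1) (hH 1)
  have h2 := congrArg (fun p => p.2.1) (hH 1)
  simp only [tMul, mul_one, hz0, Real.exp_zero, mul_zero, add_zero, one_mul] at h1 h2
  rw [hx l] at h1
  rw [hy l] at h2
  rw [hy a]
  by_contra hne
  have hy1 : (γ 1).2.1 ≠ 0 := fun h => hne (by rw [h, mul_zero])
  have hexp : Real.exp H.2.2 = l := mul_left_cancel₀ hy1 (by linarith)
  have h3 : (γ 1).2.1 * H.2.2 * Real.exp H.2.2 = 0 := by
    rw [← hexp] at h1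
    linarith
  exact mul_ne_zero (mul_ne_zero hy1 hs) (Real.exp_pos _).ne' h3

theorem tau_c_not_iso_G3 (c : ℝ) (hc : c ≠ 0) :
    ¬ ∃ φ : ((ℝ × ℝ) × ℝ) ≃ₜ (ℝ × ℝ × ℝ),
      ∀ p q : (ℝ × ℝ) × ℝ, φ (tauMul c p q) = tMul 1 (φ p) (φ q) := by
  rintro ⟨φ, hφ⟩
  have hcont := φ.continuous
  have hX := eigencurve (γ := fun a => φ ((a, 0), 0)) (by fun_prop)
    (fun a b => by rw [← hφ]; simp [tauMul]) (l := Real.exp c) (by simpa using hc)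
    (H := φ ((0, 0), 1)) (fun a => by rw [← hφ, ← hφ]; simp [tauMul])
  have hY := eigencurve (γ := fun a => φ ((0, a), 0)) (by fun_prop)
    (fun a b => by rw [← hφ]; simp [tauMul]) (l := Real.exp 1) (by simp)
    (H := φ ((0, 0), 1)) (fun a => by rw [← hφ, ← hφ]; simp [tauMul])
  have hT : ∀ t, (φ ((0, 0), t)).2.2 = t * (φ ((0, 0), 1)).2.2 :=
    additive_eq_mul (f := fun t => (φ ((0, 0), t)).2.2) (by fun_prop) fun a b => by
      have : (((0, 0), a + b) : (ℝ × ℝ) × ℝ) = tauMul c ((0, 0), a) ((0, 0), b) := by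
        simp [tauMul]
      simp only [this, hφ, tMul]
  have hXY : ∀ a b, φ ((a, b), 0) = tMul 1 (φ ((a, 0), 0)) (φ ((0, b), 0)) := fun a b => by
    rw [← hφ]; simp [tauMul]
  have hZ : ∀ a b t, (φ ((a, b), t)).2.2 = t * (φ ((0, 0), 1)).2.2 := fun a b t => by
    have : (((a, b), t) : (ℝ × ℝ) × ℝ) = tauMul c ((a, b), 0) ((0, 0), t) := by simp [tauMul]
    rw [this, hφ, hXY]
    simp only [tMul, (hX a).1, (hY b).1, hT t, zero_add]
  have hs : (φ ((0, 0), 1)).2.2 ≠ 0 := fun h => by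
    obtain ⟨⟨⟨a, b⟩, t⟩, hp⟩ := φ.surjective (0, 0, 1)
    have := hZ a b t
    rw [hp, h] at this
    simp at this
  obtain ⟨⟨⟨a, b⟩, t⟩, hp⟩ := φ.surjective (0, 1, 0)
  have ht : t = 0 := by
    have := hZ a b t
    rw [hp] at this
    exact (mul_eq_zero.mp this.symm).resolve_right hs
  subst ht
  have h1 := congrArg (fun p => p.2.1) (hXY a b)
  rw [hp] at h1
  simp [tMul, (hX a).2 hs, (hY b).2 hs] at h1
end

section
/- Order both E_1 and E_{−1} lexicographically: ((x₁,y₁),z₁) < ((x₂,y₂),z₂) iff x₁ < x₂, or x₁ = x₂ and y₁ < y₂, or x₁ = x₂ and y₁ = y₂ and z₁ < z₂. Then there is no map φ : E_1 → E_{−1} that is simultaneously a group isomorphism and strictly order-preserving; that is, E_1 and E_{−1} are not isomorphic as ordered groups. -/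
/-- The lexicographic order on (ℝ×ℝ)×ℝ: first x, then y, then z. -/
def lexLtE (p q : (ℝ × ℝ) × ℝ) : Prop :=
  p.1.1 < q.1.1 ∨
    (p.1.1 = q.1.1 ∧ (p.1.2 < q.1.2 ∨ (p.1.2 = q.1.2 ∧ p.2 < q.2)))

theorem E1_not_ordered_iso_E_neg_one :
    ¬ ∃ φ : (ℝ × ℝ) × ℝ → (ℝ × ℝ) × ℝ,
      Function.Bijective φ ∧
      (∀ p q, φ (eMul 1 p q) = eMul (-1) (φ p) (φ q)) ∧
      (∀ p q, lexLtE p q → lexLtE (φ p) (φ q)) := by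
  rintro ⟨φ, -, hmul, hlt⟩
  have h0 : φ ((0, 0), 0) = ((0, 0), 0) := by
    have h := hmul ((0, 0), 0) ((0, 0), 0)
    simp only [eMul, Prod.ext_iff] at h
    norm_num at h
    obtain ⟨⟨h1, h2⟩, h3⟩ := h
    rw [h1, h2] at h3
    norm_num at h3
    exact Prod.ext (Prod.ext h1 h2) h3
  -- The first coordinate of the image of `bⁿ` is `n` times that of the image of `b`.
  have hn : ∀ n : ℕ, (φ ((0, (n : ℝ)), 0)).1.1 = n * (φ ((0, 1), 0)).1.1 := by
    intro n
    induction n with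
    | zero => simp [h0]
    | succ k ih =>
      have h := congrArg (fun p => p.1.1) (hmul ((0, (k : ℝ)), 0) ((0, 1), 0))
      simp only [eMul] at h
      norm_num at h
      push_cast
      rw [h, ih]
      ring
  have hb := hlt ((0, 0), 0) ((0, 1), 0) (by simp [lexLtE])
  have ha := hlt ((0, 0), 0) ((1, 0), 0) (by simp [lexLtE])
  have hw := hlt ((0, 0), 0) ((0, 0), 2) (by simp [lexLtE])
  have hle : ∀ n : ℕ, n * (φ ((0, 1), 0)).1.1 ≤ (φ ((1, 0), 0)).1.1 := by
    intro n
    have h := hlt ((0, (n : ℝ)), 0) ((1, 0), 0) (by simp [lexLtE])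
    rw [← hn n]
    rcases h with h | h
    · exact h.le
    · exact h.1.le
  have hab := hmul ((1, 0), 0) ((0, 1), 0)
  have hba := hmul ((0, 1), 0) ((1, 0), 0)
  -- `a * b = (b * a) * ((0,0),2)` in `E_1`.
  have hc := hmul (eMul 1 ((0, 1), 0) ((1, 0), 0)) ((0, 0), 2)
  have he : eMul 1 (eMul 1 ((0, 1), 0) ((1, 0), 0)) ((0, 0), 2)
      = eMul 1 ((1, 0), 0) ((0, 1), 0) := by
    simp only [eMul]
    norm_num
  rw [he, hab, hba] at hc
  rw [h0] at hb ha hw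
  generalize φ ((1, 0), 0) = A at *
  generalize φ ((0, 1), 0) = B at *
  generalize φ ((0, 0), 2) = W at *
  obtain ⟨⟨X, Y⟩, Z⟩ := A
  obtain ⟨⟨U, V⟩, T⟩ := B
  obtain ⟨⟨P, Q⟩, R⟩ := W
  simp only [eMul, lexLtE, Prod.mk.injEq] at *
  obtain ⟨⟨hP, hQ⟩, hR⟩ := hc
  have hP : P = 0 := by linarith
  have hQ : Q = 0 := by linarith
  subst hP hQ
  have hR0 : 0 < R := by simpa using hw
  have hX : 0 ≤ X := by
    rcases ha with h | h
    · exact h.le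
    · exact h.1.le
  rcases hb with hU | ⟨hU, hV⟩
  · obtain ⟨n, hn'⟩ := exists_nat_gt (X / U)
    rw [div_lt_iff₀ hU] at hn'
    linarith [hle n]
  · subst hU
    have hV : 0 ≤ V := by
      rcases hV with h | h
      · exact h.le
      · exact h.1.le
    nlinarith [mul_nonneg hX hV]
end

section
/- Let c, d be real constants with d > 0. Then the map (x,y,z) ↦ (x, cx+dy, z) is a group isomorphism from G_{c,d} onto G_{0,1} that is strictly order-preserving with respect to the lexicographic orders; that is, G_{c,d} and G_{0,1} are isomorphic as ordered groups. -/
/-!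
The map `gPhi c d` turns the exponent `c * x + d * y` of the twist in `gMul c d` into the second
coordinate, which is the exponent of the twist in `gMul 0 1`; being linear in `(x, y)` it respects
addition there, hence it is a homomorphism. It is inverted by solving for `y`, as `d ≠ 0`, and it
is monotone because for fixed `x` the map `y ↦ c * x + d * y` is increasing.
-/

/-- The group operation of G_{c,d} on ℝ³:
    (x₁,y₁,z₁)·(x₂,y₂,z₂) = (x₁+x₂, y₁+y₂, z₁+e^{c x₁+d y₁}z₂). -/
noncomputable def gMul (c d : ℝ) (p q : ℝ × ℝ × ℝ) : ℝ × ℝ × ℝ :=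
  (p.1 + q.1, p.2.1 + q.2.1,
    p.2.2 + Real.exp (c * p.1 + d * p.2.1) * q.2.2)

/-- The lexicographic order on ℝ³: first x, then y, then z. -/
def lexLt3 (p q : ℝ × ℝ × ℝ) : Prop :=
  p.1 < q.1 ∨ (p.1 = q.1 ∧ (p.2.1 < q.2.1 ∨ (p.2.1 = q.2.1 ∧ p.2.2 < q.2.2)))

/-- The map (x,y,z) ↦ (x, cx+dy, z). -/
noncomputable def gPhi (c d : ℝ) (p : ℝ × ℝ × ℝ) : ℝ × ℝ × ℝ :=
  (p.1, c * p.1 + d * p.2.1, p.2.2)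

theorem Gcd_ordered_iso_G01 (c d : ℝ) (hd : 0 < d) :
    Function.Bijective (gPhi c d) ∧
    (∀ p q : ℝ × ℝ × ℝ, gPhi c d (gMul c d p q) = gMul 0 1 (gPhi c d p) (gPhi c d q)) ∧
    (∀ p q : ℝ × ℝ × ℝ, lexLt3 p q → lexLt3 (gPhi c d p) (gPhi c d q)) := by
  refine ⟨Function.bijective_iff_has_inverse.mpr
    ⟨fun p => (p.1, (p.2.1 - c * p.1) / d, p.2.2), ?_, ?_⟩, ?_, ?_⟩
  · rintro ⟨x, y, z⟩
    simp [gPhi, hd.ne']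
  · rintro ⟨x, y, z⟩
    simp [gPhi, mul_div_cancel₀ _ hd.ne']
  · rintro ⟨x, y, z⟩ ⟨x', y', z'⟩
    simp only [gPhi, gMul, zero_mul, one_mul, zero_add, Prod.mk.injEq, true_and, and_true]
    ring
  · rintro ⟨x, y, z⟩ ⟨x', y', z'⟩ (h | ⟨h, h' | ⟨h', h''⟩⟩)
    · exact Or.inl h
    -- With equal first coordinates the shift `c * x` is common, so `d > 0` decides the comparison.
    · refine Or.inr ⟨h, Or.inl ?_⟩
      dsimp only [gPhi] at *
      subst h
      gcongr
    · refine Or.inr ⟨h, Or.inr ⟨?_, h''⟩⟩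
      dsimp only [gPhi] at *
      rw [h, h']
end

section
/- The four ordered groups G_{0,1}, G_{0,−1}, G_{1,0} and G_{−1,0} are pairwise non-isomorphic as ordered groups: for any two distinct pairs (c,d) ≠ (c',d') taken from the set {(0,1), (0,−1), (1,0), (−1,0)}, there is no map from G_{c,d} to G_{c',d'} that is simultaneously a group isomorphism and strictly order-preserving. -/
/-- `φ` is a strictly order-preserving group homomorphism, not necessarily surjective, between the
groups given by the first and by the second pair of constants. -/
structure IsOrdHom (c d c' d' : ℝ) (φ : ℝ × ℝ × ℝ → ℝ × ℝ × ℝ) : Prop where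
  map_gMul : ∀ p q, φ (gMul c d p q) = gMul c' d' (φ p) (φ q)
  map_lt : ∀ p q, lexLt3 p q → lexLt3 (φ p) (φ q)

namespace IsOrdHom

variable {c d c' d' : ℝ} {φ : ℝ × ℝ × ℝ → ℝ × ℝ × ℝ}

theorem map_one (h : IsOrdHom c d c' d' φ) : φ (0, 0, 0) = (0, 0, 0) := by
  have h0 := h.map_gMul (0, 0, 0) (0, 0, 0)
  rcases hp : φ (0, 0, 0) with ⟨a, b, e⟩
  simp only [gMul, mul_zero, add_zero, hp, Prod.mk.injEq] at h0
  obtain ⟨h1, h2, h3⟩ := h0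
  have ha : a = 0 := by linarith
  have hb : b = 0 := by linarith
  subst ha hb
  simp at h3
  simp [h3]

theorem map_axis (h : IsOrdHom c d c' d' φ) (hcd : c * c + d * d = 1) :
    ∃ w, 0 < w ∧ φ (0, 0, 1) = (0, 0, w) := by
  have he : (0 : ℝ) < Real.exp 1 - 1 := by
    have := Real.add_one_lt_exp (one_ne_zero : (1 : ℝ) ≠ 0)
    linarith
  -- `(0,0,1)` is the commutator of `(c,d,0)` and `(0,0,t)`, where `(exp 1 - 1) * t = 1`.
  obtain ⟨t, ht⟩ : ∃ t : ℝ, (Real.exp 1 - 1) * t = 1 := ⟨_, mul_inv_cancel₀ he.ne'⟩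
  have hc : gMul c d (c, d, 0) (0, 0, t) =
      gMul c d (0, 0, 1) (gMul c d (0, 0, t) (c, d, 0)) := by
    simp only [gMul, hcd, mul_zero, add_zero, zero_add, Real.exp_zero, one_mul, Prod.mk.injEq,
      true_and]
    linarith
  have hφ := congrArg φ hc
  simp only [h.map_gMul] at hφ
  have hpos := h.map_lt (0, 0, 0) (0, 0, 1) (by simp [lexLt3])
  rw [h.map_one] at hpos
  rcases hp : φ (0, 0, 1) with ⟨a, b, e⟩
  simp only [gMul, hp, Prod.mk.injEq] at hφ
  obtain ⟨h1, h2, -⟩ := hφ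
  have ha : a = 0 := by linarith
  have hb : b = 0 := by linarith
  subst ha hb
  simp only [hp, lexLt3, lt_irrefl, true_and, false_or] at hpos
  exact ⟨e, hpos, rfl⟩

/-- The order relation between `g * (0,0,1)` and `(0,0,1) * g` is carried over by `φ`. -/
theorem lam_sign (h : IsOrdHom c d c' d' φ) (hcd : c * c + d * d = 1) (g : ℝ × ℝ × ℝ) :
    (0 < c * g.1 + d * g.2.1 → 0 < c' * (φ g).1 + d' * (φ g).2.1) ∧
    (c * g.1 + d * g.2.1 < 0 → c' * (φ g).1 + d' * (φ g).2.1 < 0) ∧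
    (c * g.1 + d * g.2.1 = 0 → c' * (φ g).1 + d' * (φ g).2.1 = 0) := by
  obtain ⟨w, hw, hφw⟩ := h.map_axis hcd
  have h1 : φ (gMul c d g (0, 0, 1)) = _ := h.map_gMul g (0, 0, 1)
  have h2 : φ (gMul c d (0, 0, 1) g) = _ := h.map_gMul (0, 0, 1) g
  rw [hφw] at h1 h2
  refine ⟨fun hl => ?_, fun hl => ?_, fun hl => ?_⟩
  · have h3 := h.map_lt (gMul c d (0, 0, 1) g) (gMul c d g (0, 0, 1)) (by
      have := Real.one_lt_exp_iff.2 hl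
      simp [lexLt3, gMul]
      linarith)
    rw [h1, h2] at h3
    simp [lexLt3, gMul] at h3
    rw [← Real.one_lt_exp_iff]
    nlinarith
  · have h3 := h.map_lt (gMul c d g (0, 0, 1)) (gMul c d (0, 0, 1) g) (by
      have := Real.exp_lt_one_iff.2 hl
      simp [lexLt3, gMul]
      linarith)
    rw [h1, h2] at h3
    simp [lexLt3, gMul] at h3
    rw [← Real.exp_lt_one_iff]
    nlinarith
  · have h3 : gMul c d g (0, 0, 1) = gMul c d (0, 0, 1) g := by
      simp [gMul, hl, add_comm]
    rw [h3, h2] at h1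
    simp [gMul] at h1
    rw [← Real.exp_eq_one_iff]
    have h4 : (Real.exp (c' * (φ g).1 + d' * (φ g).2.1) - 1) * w = 0 := by linarith
    rcases mul_eq_zero.1 h4 with h5 | h5 <;> linarith

theorem lam_pos_iff (h : IsOrdHom c d c' d' φ) (hcd : c * c + d * d = 1) (g : ℝ × ℝ × ℝ) :
    0 < c' * (φ g).1 + d' * (φ g).2.1 ↔ 0 < c * g.1 + d * g.2.1 := by
  obtain ⟨h1, h2, h3⟩ := h.lam_sign hcd g
  grind

theorem lam_neg_iff (h : IsOrdHom c d c' d' φ) (hcd : c * c + d * d = 1) (g : ℝ × ℝ × ℝ) :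
    c' * (φ g).1 + d' * (φ g).2.1 < 0 ↔ c * g.1 + d * g.2.1 < 0 := by
  obtain ⟨h1, h2, h3⟩ := h.lam_sign hcd g
  grind

theorem map_pos (h : IsOrdHom c d c' d' φ) {g : ℝ × ℝ × ℝ} (hg : lexLt3 (0, 0, 0) g) :
    lexLt3 (0, 0, 0) (φ g) := by
  simpa only [h.map_one] using h.map_lt _ _ hg

theorem map_neg (h : IsOrdHom c d c' d' φ) {g : ℝ × ℝ × ℝ} (hg : lexLt3 g (0, 0, 0)) :
    lexLt3 (φ g) (0, 0, 0) := by
  simpa only [h.map_one] using h.map_lt _ _ hg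

/-- There is no map from `G_{±1,0}` to `G_{∓1,0}`, even without surjectivity. -/
theorem not_first (h : IsOrdHom c 0 (-c) 0 φ) (hc : c * c = 1) : False := by
  have h1 := h.lam_pos_iff (by linarith) (1, 0, 0)
  have h2 := h.lam_neg_iff (by linarith) (1, 0, 0)
  have h3 := h.map_pos (g := (1, 0, 0)) (by simp [lexLt3])
  rcases mul_self_eq_one_iff.1 hc with rfl | rfl <;> simp [lexLt3] at h1 h2 h3 <;> grind

/-- There is no surjective map from `G_{0,±1}` to `G_{0,∓1}`. -/
theorem not_second (h : IsOrdHom 0 d 0 (-d) φ) (hs : Function.Surjective φ) (hd : d * d = 1) :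
    False := by
  have h1 := h.lam_pos_iff (by linarith) (0, 1, 0)
  have h2 := h.lam_neg_iff (by linarith) (0, 1, 0)
  have h3 := h.map_pos (g := (0, 1, 0)) (by simp [lexLt3])
  -- Halving the positive first coordinate puts this point between the identity and `φ (0,1,0)`.
  obtain ⟨k, hk⟩ := hs ((φ (0, 1, 0)).1 / 2, 1, 0)
  have k1 := h.lam_pos_iff (by linarith) k
  have k2 := h.lam_neg_iff (by linarith) k
  have k3 := h.map_neg (g := k)
  have k4 := h.map_lt (0, 1, 0) k
  rw [hk] at k1 k2 k3 k4
  rcases mul_self_eq_one_iff.1 hd with rfl | rfl <;>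
    simp [lexLt3] at h1 h2 h3 k1 k2 k3 k4 <;> grind

/-- There is no map from `G_{0,±1}` to `G_{±1,0}`, for all choices of signs. -/
theorem not_second_first (h : IsOrdHom 0 d c' 0 φ) (hd : d * d = 1) (hc : c' * c' = 1) :
    False := by
  have g1 := h.lam_pos_iff (by linarith) (1, 0, 0)
  have g2 := h.lam_neg_iff (by linarith) (1, 0, 0)
  have h1 := h.lam_pos_iff (by linarith) (0, 1, 0)
  have h2 := h.lam_neg_iff (by linarith) (0, 1, 0)
  have h3 := h.map_pos (g := (0, 1, 0)) (by simp [lexLt3])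
  have h4 := h.map_lt (0, 1, 0) (1, 0, 0) (by simp [lexLt3])
  rcases mul_self_eq_one_iff.1 hd with rfl | rfl <;>
  rcases mul_self_eq_one_iff.1 hc with rfl | rfl <;>
    simp [lexLt3] at g1 g2 h1 h2 h3 h4 <;> grind

/-- There is no surjective map from `G_{±1,0}` to `G_{0,±1}`, for all choices of signs. -/
theorem not_first_second (h : IsOrdHom c 0 0 d' φ) (hs : Function.Surjective φ)
    (hc : c * c = 1) (hd : d' * d' = 1) : False := by
  obtain ⟨k, hk⟩ := hs (1, 0, 0)
  obtain ⟨g, hg⟩ := hs (0, 1, 0)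
  have k1 := h.lam_pos_iff (by linarith) k
  have k2 := h.lam_neg_iff (by linarith) k
  have g1 := h.lam_pos_iff (by linarith) g
  have g2 := h.lam_neg_iff (by linarith) g
  have g3 := h.map_neg (g := g)
  have g4 := h.map_lt k g
  rw [hk] at k1 k2 g4
  rw [hg] at g1 g2 g3 g4
  rcases mul_self_eq_one_iff.1 hc with rfl | rfl <;>
  rcases mul_self_eq_one_iff.1 hd with rfl | rfl <;>
    simp [lexLt3] at k1 k2 g1 g2 g3 g4 <;> grind

end IsOrdHom

theorem four_Gcd_pairwise_not_ordered_iso :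
    ∀ cd cd' : ℝ × ℝ,
      cd ∈ ({(0, 1), (0, -1), (1, 0), (-1, 0)} : Set (ℝ × ℝ)) →
      cd' ∈ ({(0, 1), (0, -1), (1, 0), (-1, 0)} : Set (ℝ × ℝ)) →
      cd ≠ cd' →
      ¬ ∃ φ : ℝ × ℝ × ℝ → ℝ × ℝ × ℝ,
        Function.Bijective φ ∧
        (∀ p q, φ (gMul cd.1 cd.2 p q) = gMul cd'.1 cd'.2 (φ p) (φ q)) ∧
        (∀ p q, lexLt3 p q → lexLt3 (φ p) (φ q)) := by
  rintro cd cd' h h' hne ⟨φ, ⟨-, hs⟩, hm, hl⟩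
  have H : IsOrdHom cd.1 cd.2 cd'.1 cd'.2 φ := ⟨hm, hl⟩
  clear hm hl
  simp only [Set.mem_insert_iff, Set.mem_singleton_iff] at h h'
  rcases h with rfl | rfl | rfl | rfl <;> rcases h' with rfl | rfl | rfl | rfl <;>
    first
    | exact hne rfl
    | exact H.not_second_first (by norm_num) (by norm_num)
    | exact H.not_first_second hs (by norm_num) (by norm_num)
    | exact IsOrdHom.not_first (by simpa using H) (by norm_num)
    | exact IsOrdHom.not_first (c := -1) (by simpa using H) (by norm_num)
    | exact IsOrdHom.not_second (d := 1) (by simpa using H) hs (by norm_num)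
    | exact IsOrdHom.not_second (d := -1) (by simpa using H) hs (by norm_num)
end
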